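/- There exists a constant c > 0 such that for infinitely many natural numbers n there exist a finite tree (connected acyclic simple graph) T on n vertices with maximum degree at most 3·⌈√n⌉ and a walk w on T following the LFV-v policy whose cover time is at least n^(c·√n). (That is, LFV-v has worst-case exploration time n^Ω(√n), even on planar graphs of sublinear maximum degree; the witnessing graph is a caterpillar tree.) -/

import Mathlib

/-!
Attach `D + k` leaves to the vertex `k` of the path `0, …, 2 * T + 1`. A walk under the policy
stays at a vertex of the path, going around its leaves, until these have been visited as often as
the least visited neighbour on the path; each such round adds about `D` visits to the vertex. So
when the walk passes along the path, each vertex it leaves gets about `D` times the visits of the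
next one.

A first sweep from the far end visits the leaves at even positions once and skips those at odd
positions. From then on the walk can make round trips from `0`, the first up to position `1` and
each later one two positions further: at the odd position where it turns, the next vertex still has
slightly more visits than the previous one. Each round trip multiplies the visits to the vertex `1`
by more than `D ^ 2`, so after `T` of them this vertex has at least `D ^ (2 * T)` visits, while
the leaves at the far end have none. For `D = 8 * T` the tree has about `18 * T ^ 2` vertices.
-/

namespace LFV

open Finset Function Relation

/-! ### Walks following the policy -/

section Policy

variable {V W : Type*} {G : SimpleGraph V} {H : SimpleGraph W}

/-- The number of visits of `w` to `v` up to and including time `t`. -/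
noncomputable def visitCount (w : ℕ → V) (t : ℕ) (v : V) : ℕ :=
  {s : ℕ | s ≤ t ∧ w s = v}.ncard

lemma visitCount_eq_count [DecidableEq V] (w : ℕ → V) (t : ℕ) (v : V) :
    visitCount w t v = Nat.count (fun s => w s = v) (t + 1) := by
  rw [visitCount, Nat.count_eq_card_filter_range, ← Set.ncard_coe_finset]
  congr 1
  ext s
  simp

lemma visitCount_comp {f : V → W} (hf : Injective f) (w : ℕ → V) (t : ℕ) (v : V) :
    visitCount (f ∘ w) t (f v) = visitCount w t v := by
  simp only [visitCount, comp_apply, hf.eq_iff]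

/-- An infinite walk in `G` that obeys the LFV-v policy: every step leads to a neighbour visited
least often so far. -/
structure IsLFVWalk (G : SimpleGraph V) (w : ℕ → V) : Prop where
  adj : ∀ t, G.Adj (w t) (w (t + 1))
  visitCount_le : ∀ t u, G.Adj (w t) u → visitCount w t (w (t + 1)) ≤ visitCount w t u

lemma IsLFVWalk.comp_iso {w : ℕ → V} (hw : IsLFVWalk G w) (e : G ≃g H) :
    IsLFVWalk H (e ∘ w) where
  adj t := e.map_adj_iff.mpr (hw.adj t)
  visitCount_le t u hu := by
    obtain ⟨u, rfl⟩ := e.surjective u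
    rw [visitCount_comp e.injective, comp_apply, visitCount_comp e.injective]
    exact hw.visitCount_le t u (e.map_adj_iff.mp hu)

variable [DecidableEq V]

/-- One step of the policy on states `(v, c)`, where `v` is the current vertex and `c u` is the
number of visits to `u` *before* the current one. The visit in progress may be left out of `c`
because the policy only compares neighbours of `v`. -/
def LFVStep (G : SimpleGraph V) (s s' : V × (V → ℕ)) : Prop :=
  G.Adj s.1 s'.1 ∧ (∀ u, G.Adj s.1 u → s.2 s'.1 ≤ s.2 u) ∧ s'.2 = s.2 + Pi.single s.1 1

/-- Some finite walk obeying the policy ends at `v` with the earlier visits counted by `c`. -/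
def LFVReachable (G : SimpleGraph V) (v : V) (c : V → ℕ) : Prop :=
  ∃ v₀, ReflTransGen (LFVStep G) (v₀, 0) (v, c)

lemma LFVReachable.start (v : V) : LFVReachable G v 0 := ⟨v, .refl⟩

lemma LFVReachable.step {v u : V} {c : V → ℕ} (h : LFVReachable G v c) (hvu : G.Adj v u)
    (hmin : ∀ u', G.Adj v u' → c u ≤ c u') : LFVReachable G u (c + Pi.single v 1) :=
  let ⟨v₀, h₀⟩ := h
  ⟨v₀, h₀.tail ⟨hvu, hmin, rfl⟩⟩

lemma exists_lfvStep (hG : ∀ v, ∃ u, G.Adj v u) (s : V × (V → ℕ)) : ∃ s', LFVStep G s s' := by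
  have hne : {u | G.Adj s.1 u}.Nonempty := hG s.1
  exact ⟨(argminOn s.2 _ hne, _), argminOn_mem s.2 _ hne,
    fun _ hu => argminOn_le s.2 {u | G.Adj s.1 u} hu, rfl⟩

lemma count_eq_of_lfvStep {s : ℕ → V × (V → ℕ)} (h₀ : (s 0).2 = 0)
    (hs : ∀ t, LFVStep G (s t) (s (t + 1))) (t : ℕ) (v : V) :
    Nat.count (fun r => (s r).1 = v) t = (s t).2 v := by
  induction t with
  | zero => simp [h₀]
  | succ t ih => simp [Nat.count_succ, ih, (hs t).2.2, Pi.single_apply, eq_comm (a := v)]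

lemma isLFVWalk_of_lfvStep {s : ℕ → V × (V → ℕ)} (h₀ : (s 0).2 = 0)
    (hs : ∀ t, LFVStep G (s t) (s (t + 1))) : IsLFVWalk G fun t => (s t).1 where
  adj t := (hs t).1
  visitCount_le t u hu := by
    have count_of_adj {v : V} (hv : G.Adj (s t).1 v) :
        visitCount (fun t => (s t).1) t v = (s t).2 v := by
      rw [visitCount_eq_count, Nat.count_succ, count_eq_of_lfvStep h₀ hs, if_neg hv.ne, add_zero]
    rw [count_of_adj hu, count_of_adj (hs t).1]
    exact (hs t).2.1 u hu

lemma exists_seq_of_reflTransGen {α : Type*} {r : α → α → Prop} (hr : ∀ a, ∃ b, r a b) {a b : α}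
    (h : ReflTransGen r a b) :
    ∃ s : ℕ → α, s 0 = a ∧ (∀ n, r (s n) (s (n + 1))) ∧ ∃ n, s n = b := by
  induction h using ReflTransGen.head_induction_on with
  | refl =>
    choose next hnext using hr
    exact ⟨fun n => next^[n] b, rfl, fun n => by
      simpa only [iterate_succ_apply'] using hnext _, 0, rfl⟩
  | @head a a' haa' _ ih =>
    obtain ⟨s, hs₀, hs, n, hn⟩ := ih
    refine ⟨fun | 0 => a | k + 1 => s k, rfl, ?_, n + 1, hn⟩
    rintro (_ | k)
    · simpa only [hs₀] using haa'
    · exact hs k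

theorem LFVReachable.exists_isLFVWalk {v : V} {c : V → ℕ} (h : LFVReachable G v c)
    (hG : ∀ v, ∃ u, G.Adj v u) {x : V} (hx : c x = 0) (y : V) :
    ∃ w, IsLFVWalk G w ∧ ∀ t < c y, w t ≠ x := by
  obtain ⟨v₀, h⟩ := h
  obtain ⟨s, hs₀, hs, T, hT⟩ := exists_seq_of_reflTransGen (exists_lfvStep hG) h
  have hcount (u : V) : Nat.count (fun r => (s r).1 = u) T = c u := by
    rw [count_eq_of_lfvStep (by rw [hs₀]) hs, hT]
  refine ⟨fun t => (s t).1, isLFVWalk_of_lfvStep (by rw [hs₀]) hs, fun t ht => ?_⟩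
  have ht' : t < T := ht.trans_le (hcount y ▸ Nat.count_le _)
  exact Nat.count_iff_forall_not.mp ((hcount x).trans hx) t ht'

end Policy

/-! ### Trees with pendant leaves -/

section AttachLeaves

variable {ι : Type*}

/-- The graph `B` with `ℓ i` pendant leaves attached to each vertex `i`: the hubs `Sum.inl i` carry
a copy of `B`, and `Sum.inr ⟨i, j⟩` is the `j`-th leaf at `i`. -/
def attachLeaves (B : SimpleGraph ι) (ℓ : ι → ℕ) : SimpleGraph (ι ⊕ Σ i, Fin (ℓ i)) where
  Adj
    | .inl i, .inl j => B.Adj i j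
    | .inl i, .inr p => p.1 = i
    | .inr p, .inl i => p.1 = i
    | .inr _, .inr _ => False
  symm := ⟨by
    rintro (i | p) (j | q) h
    exacts [SimpleGraph.Adj.symm h, h, h, h]⟩
  loopless := ⟨by
    rintro (i | p) h
    exacts [B.irrefl h, h]⟩

variable {B : SimpleGraph ι} {ℓ : ι → ℕ}

lemma connected_attachLeaves (hB : B.Connected) (ℓ : ι → ℕ) : (attachLeaves B ℓ).Connected := by
  let hubs : B →g attachLeaves B ℓ := ⟨Sum.inl, id⟩
  obtain ⟨i₀⟩ := hB.nonempty
  rw [SimpleGraph.connected_iff_exists_forall_reachable]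
  have hub_reachable (i : ι) : (attachLeaves B ℓ).Reachable (.inl i₀) (.inl i) :=
    (hB i₀ i).map hubs
  refine ⟨.inl i₀, ?_⟩
  rintro (i | ⟨i, j⟩)
  · exact hub_reachable i
  · have hleaf : (attachLeaves B ℓ).Adj (.inl i) (.inr ⟨i, j⟩) := rfl
    exact (hub_reachable i).trans hleaf.reachable

lemma edgeSet_attachLeaves_subset : (attachLeaves B ℓ).edgeSet ⊆
    Sym2.map Sum.inl '' B.edgeSet ∪ Set.range fun p : Σ i, Fin (ℓ i) => s(.inl p.1, .inr p) := by
  intro e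
  induction e using Sym2.ind with
  | _ x y =>
    rcases x with i | p <;> rcases y with j | q <;> intro h
    · exact .inl ⟨s(i, j), h, rfl⟩
    · obtain rfl : q.1 = i := h
      exact .inr ⟨q, rfl⟩
    · obtain rfl : p.1 = j := h
      exact .inr ⟨p, Sym2.eq_swap⟩
    · exact h.elim

lemma isTree_attachLeaves [Finite ι] (hB : B.IsTree) (ℓ : ι → ℕ) : (attachLeaves B ℓ).IsTree := by
  have hconn := connected_attachLeaves hB.connected ℓ
  rw [SimpleGraph.isTree_iff_connected_and_card]
  refine ⟨hconn, le_antisymm ?_ hconn.card_vert_le_card_edgeSet_add_one⟩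
  have hBcard := (SimpleGraph.isTree_iff_connected_and_card.mp hB).2
  have hle : (attachLeaves B ℓ).edgeSet.ncard ≤ B.edgeSet.ncard + Nat.card (Σ i, Fin (ℓ i)) :=
    calc (attachLeaves B ℓ).edgeSet.ncard
        ≤ _ := Set.ncard_le_ncard edgeSet_attachLeaves_subset (Set.toFinite _)
      _ ≤ _ := Set.ncard_union_le _ _
      _ ≤ _ := add_le_add (Set.ncard_image_le (Set.toFinite _)) (Finite.card_range_le _)
  rw [Nat.card_coe_set_eq] at hBcard ⊢
  rw [Nat.card_sum]
  lia

lemma ncard_neighborSet_attachLeaves_le [Finite ι] {d m : ℕ} (hd : ∀ i, (B.neighborSet i).ncard ≤ d)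
    (hm : ∀ i, ℓ i ≤ m) (hdm : 1 ≤ d + m) (x : ι ⊕ Σ i, Fin (ℓ i)) :
    ((attachLeaves B ℓ).neighborSet x).ncard ≤ d + m := by
  rcases x with i | p
  · have hsub : (attachLeaves B ℓ).neighborSet (.inl i) ⊆
        Sum.inl '' B.neighborSet i ∪ Set.range fun j => Sum.inr ⟨i, j⟩ := by
      rintro (k | ⟨k, j⟩) h
      · exact .inl ⟨k, h, rfl⟩
      · obtain rfl : k = i := h
        exact .inr ⟨j, rfl⟩
    calc ((attachLeaves B ℓ).neighborSet (.inl i)).ncard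
        ≤ _ := Set.ncard_le_ncard hsub (Set.toFinite _)
      _ ≤ _ := Set.ncard_union_le _ _
      _ ≤ _ := add_le_add ((Set.ncard_image_le (Set.toFinite _)).trans (hd i))
        ((Finite.card_range_le _).trans (by simpa using hm i))
  · have hsub : (attachLeaves B ℓ).neighborSet (.inr p) ⊆ {.inl p.1} := by
      rintro (k | q) h
      · exact congrArg Sum.inl (show p.1 = k from h).symm
      · exact h.elim
    exact (Set.ncard_le_ncard hsub).trans (by simpa using hdm)

end AttachLeaves

lemma isTree_pathGraph (n : ℕ) : (SimpleGraph.pathGraph (n + 1)).IsTree := by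
  have hconn := SimpleGraph.pathGraph_connected n
  rw [SimpleGraph.isTree_iff_connected_and_card]
  refine ⟨hconn, le_antisymm ?_ hconn.card_vert_le_card_edgeSet_add_one⟩
  have hsub : (SimpleGraph.pathGraph (n + 1)).edgeSet ⊆
      Set.range fun i : Fin n => s(i.castSucc, i.succ) := by
    intro e
    induction e using Sym2.ind with
    | _ i j =>
      intro h
      rcases SimpleGraph.pathGraph_adj.mp h with h | h
      · exact ⟨⟨i, by lia⟩, congrArg₂ _ rfl (Fin.ext h)⟩
      · exact ⟨⟨j, by lia⟩, (congrArg₂ _ rfl (Fin.ext h)).trans Sym2.eq_swap⟩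
  rw [Nat.card_coe_set_eq, Nat.card_fin]
  calc _ ≤ _ := Nat.add_le_add_right (Set.ncard_le_ncard hsub (Set.toFinite _)) 1
    _ ≤ _ := Nat.add_le_add_right (Finite.card_range_le _) 1
    _ = n + 1 := by rw [Nat.card_fin]

lemma ncard_neighborSet_pathGraph_le {n : ℕ} (i : Fin n) :
    ((SimpleGraph.pathGraph n).neighborSet i).ncard ≤ 2 := by
  calc ((SimpleGraph.pathGraph n).neighborSet i).ncard
      = (Fin.val '' (SimpleGraph.pathGraph n).neighborSet i).ncard :=
        (Set.ncard_image_of_injective _ Fin.val_injective).symm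
    _ ≤ ({i.val - 1, i.val + 1} : Set ℕ).ncard := Set.ncard_le_ncard <| by
        rintro _ ⟨j, h, rfl⟩
        have := SimpleGraph.pathGraph_adj.mp h
        simp only [Set.mem_insert_iff, Set.mem_singleton_iff]
        lia
    _ ≤ 2 := (Set.ncard_insert_le _ _).trans (by rw [Set.ncard_singleton])

/-! ### Configurations with balanced leaves -/

section Profile

variable {ι : Type*}

/-- The visit counts of a walk on `attachLeaves B ℓ` that has been to all leaves at the same hub
equally often: `leaf i` times to each leaf at `i`, and `arrivals i` times to `i` other than on the
way back from a leaf at `i`. -/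
structure Profile (ι : Type*) where
  leaf : ι → ℕ
  arrivals : ι → ℕ

namespace Profile

/-- The number of visits to the hub `i`, each visit to a leaf at `i` causing one return to `i`. -/
def hub (ℓ : ι → ℕ) (P : Profile ι) (i : ι) : ℕ := ℓ i * P.leaf i + P.arrivals i

/-- The visit counts of all vertices of `attachLeaves B ℓ` described by `P`. -/
def counts (ℓ : ι → ℕ) (P : Profile ι) : ι ⊕ (Σ i, Fin (ℓ i)) → ℕ :=
  Sum.elim (P.hub ℓ) fun p => P.leaf p.1

/-- The profile along a map of the hubs. -/
def comp {κ : Type*} (P : Profile ι) (g : κ → ι) : Profile κ := ⟨P.leaf ∘ g, P.arrivals ∘ g⟩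

variable [DecidableEq ι]

/-- The profile after every hub of `s` has been left once more, the leaves at `i ∈ s` having been
raised to `M i` visits before. -/
def sweep (P : Profile ι) (s : Finset ι) (M : ι → ℕ) : Profile ι :=
  ⟨s.piecewise M P.leaf, s.piecewise (P.arrivals + 1) P.arrivals⟩

variable {P : Profile ι} {s : Finset ι} {M ℓ : ι → ℕ} {i : ι}

lemma sweep_empty : P.sweep ∅ M = P := by simp [sweep]

lemma sweep_sweep {t : Finset ι} (hst : Disjoint s t) :
    (P.sweep s M).sweep t M = P.sweep (s ∪ t) M := by
  have hnot (i : ι) : i ∈ s → i ∉ t := fun hs ht => disjoint_left.mp hst hs ht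
  simp only [sweep, mk.injEq]
  constructor <;> funext i <;> simp only [piecewise, Pi.add_apply, mem_union] <;> grind

lemma sweep_leaf_of_mem (hi : i ∈ s) : (P.sweep s M).leaf i = M i := piecewise_eq_of_mem _ _ _ hi

lemma sweep_leaf_of_notMem (hi : i ∉ s) : (P.sweep s M).leaf i = P.leaf i :=
  piecewise_eq_of_notMem _ _ _ hi

lemma sweep_arrivals_of_mem (hi : i ∈ s) : (P.sweep s M).arrivals i = P.arrivals i + 1 :=
  piecewise_eq_of_mem _ _ _ hi

lemma sweep_arrivals_of_notMem (hi : i ∉ s) : (P.sweep s M).arrivals i = P.arrivals i :=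
  piecewise_eq_of_notMem _ _ _ hi

lemma sweep_arrivals_le : (P.sweep s M).arrivals i ≤ P.arrivals i + 1 := by
  by_cases hi : i ∈ s
  · rw [sweep_arrivals_of_mem hi]
  · exact (sweep_arrivals_of_notMem hi).trans_le (Nat.le_succ _)

lemma sweep_hub_of_mem (hi : i ∈ s) : (P.sweep s M).hub ℓ i = ℓ i * M i + P.arrivals i + 1 := by
  rw [hub, sweep_leaf_of_mem hi, sweep_arrivals_of_mem hi, add_assoc]

lemma sweep_hub_of_notMem (hi : i ∉ s) : (P.sweep s M).hub ℓ i = P.hub ℓ i := by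
  rw [hub, sweep_leaf_of_notMem hi, sweep_arrivals_of_notMem hi, hub]

lemma sweep_singleton_comp {κ : Type*} [DecidableEq κ] {g : κ → ι} (hg : Injective g) (k : κ) :
    (P.sweep {g k} M).comp g = (P.comp g).sweep {k} (M ∘ g) := by
  simp only [sweep, comp, mk.injEq]
  constructor <;> funext i <;> simp [piecewise, hg.eq_iff]

end Profile

variable [DecidableEq ι] {B : SimpleGraph ι} {ℓ : ι → ℕ}

lemma LFVReachable.excursion {i : ι} {c : ι ⊕ (Σ i, Fin (ℓ i)) → ℕ}
    (h : LFVReachable (attachLeaves B ℓ) (.inl i) c) (j : Fin (ℓ i))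
    (hmin : ∀ u, (attachLeaves B ℓ).Adj (.inl i) u → c (.inr ⟨i, j⟩) ≤ c u) :
    LFVReachable (attachLeaves B ℓ) (.inl i)
      (c + Pi.single (.inl i) 1 + Pi.single (.inr ⟨i, j⟩) 1) := by
  have hleaf : (attachLeaves B ℓ).Adj (.inl i) (.inr ⟨i, j⟩) := rfl
  refine (h.step hleaf hmin).step hleaf.symm ?_
  rintro (k | p) hk
  · obtain rfl : i = k := hk
    rfl
  · exact hk.elim

lemma LFVReachable.excursions {i : ι} {c : ι ⊕ (Σ i, Fin (ℓ i)) → ℕ} {m : ℕ}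
    (h : LFVReachable (attachLeaves B ℓ) (.inl i) c) (hleaf : ∀ j, c (.inr ⟨i, j⟩) = m)
    (hhub : ∀ k, B.Adj i k → m ≤ c (.inl k)) (s : Finset (Fin (ℓ i))) :
    LFVReachable (attachLeaves B ℓ) (.inl i)
      (c + Pi.single (.inl i) #s + ∑ j ∈ s, Pi.single (.inr ⟨i, j⟩) 1) := by
  induction s using Finset.induction_on with
  | empty => simpa using h
  | insert j s hj ih =>
    have hj' : ∀ j' ∈ s, ¬j = j' := fun j' hj' hjj' => hj (hjj' ▸ hj')
    convert ih.excursion j ?_ using 1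
    · rw [card_insert_of_notMem hj, sum_insert hj, Pi.single_add]
      abel
    · rintro u hu
      have hm : m ≤ c u := by
        rcases u with k | ⟨k, j'⟩
        · exact hhub k hu
        · obtain rfl : k = i := hu
          exact (hleaf j').ge
      calc _ = m := by
            simp +contextual [hleaf, Finset.sum_apply, hj']
        _ ≤ c u := hm
        _ ≤ _ := by simp only [Pi.add_apply, add_assoc, Nat.le_add_right]

/-- A walk obeying the policy can stand at the hub `i` with its earlier visits described by `P`. -/
def HubReachable (B : SimpleGraph ι) (ℓ : ι → ℕ) (P : Profile ι) (i : ι) : Prop :=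
  LFVReachable (attachLeaves B ℓ) (.inl i) (P.counts ℓ)

lemma HubReachable.start (i : ι) : HubReachable B ℓ ⟨0, 0⟩ i := by
  have h : (⟨0, 0⟩ : Profile ι).counts ℓ = 0 := by
    funext x
    rcases x with i | _ <;> simp [Profile.counts, Profile.hub]
  rw [HubReachable, h]
  exact .start _

lemma HubReachable.raise_leaves_once {P : Profile ι} {i : ι} (h : HubReachable B ℓ P i)
    (hmin : ∀ k, B.Adj i k → P.leaf i ≤ P.hub ℓ k) :
    HubReachable B ℓ ⟨update P.leaf i (P.leaf i + 1), P.arrivals⟩ i := by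
  have hround := LFVReachable.excursions h (fun _ => rfl) hmin univ
  rw [HubReachable]
  convert hround using 1
  funext x
  rcases x with k | ⟨k, j⟩
  · rcases eq_or_ne k i with rfl | hk
    · simp [Profile.counts, Profile.hub, Finset.sum_apply, mul_add_one, add_right_comm]
    · simp [Profile.counts, Profile.hub, hk]
  · rcases eq_or_ne k i with rfl | hk
    · simp [Profile.counts, Finset.sum_apply, Pi.single_apply]
    · simp [Profile.counts, hk, Finset.sum_apply]

lemma HubReachable.raise_leaves {P : Profile ι} {i : ι} (h : HubReachable B ℓ P i) {m : ℕ}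
    (hm : P.leaf i ≤ m) (hmin : ∀ k, B.Adj i k → m ≤ P.hub ℓ k + 1) :
    HubReachable B ℓ ⟨update P.leaf i m, P.arrivals⟩ i := by
  induction m, hm using Nat.le_induction with
  | base => simpa using h
  | succ m _ ih =>
    have hround := (ih fun k hk => by have := hmin k hk; lia).raise_leaves_once fun k hk => by
      simpa [Profile.hub, hk.ne'] using hmin k hk
    simpa using hround

lemma HubReachable.advance {P : Profile ι} {i j : ι} (h : HubReachable B ℓ P i) (hij : B.Adj i j)
    (hmin : ∀ k, B.Adj i k → P.hub ℓ j ≤ P.hub ℓ k) {M : ι → ℕ} (hleaf : P.leaf i ≤ M i)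
    (hlo : P.hub ℓ j ≤ M i) (hhi : M i ≤ P.hub ℓ j + 1) :
    HubReachable B ℓ (P.sweep {i} M) j := by
  have hraised := h.raise_leaves hleaf fun k hk => hhi.trans (Nat.add_le_add_right (hmin k hk) 1)
  have hub_eq {k : ι} (hk : B.Adj i k) :
      Profile.hub ℓ ⟨update P.leaf i (M i), P.arrivals⟩ k = P.hub ℓ k := by
    simp [Profile.hub, hk.ne']
  have hadj : (attachLeaves B ℓ).Adj (.inl i) (.inl j) := hij
  have hstep := LFVReachable.step hraised hadj <| by
    rintro (k | p) hk
    · change Profile.hub _ _ _ ≤ Profile.hub _ _ _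
      rw [hub_eq hij, hub_eq hk]
      exact hmin k hk
    · change Profile.hub _ _ _ ≤ update P.leaf i (M i) p.1
      rw [hub_eq hij, show p.1 = i from hk, update_self]
      exact hlo
  rw [HubReachable]
  convert hstep using 1
  funext x
  rcases x with k | ⟨k, l⟩
  · rcases eq_or_ne k i with rfl | hk
    · simp [Profile.counts, Profile.hub, Profile.sweep, add_assoc]
    · simp [Profile.counts, Profile.hub, Profile.sweep, hk]
  · rcases eq_or_ne k i with rfl | hk
    · simp [Profile.counts, Profile.sweep]
    · simp [Profile.counts, Profile.sweep, hk]

end Profile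

/-! ### Sweeps along a path -/

section Spine

variable {K : ℕ} {ℓ : ℕ → ℕ} {P : Profile ℕ}

/-- `HubReachable` for the path `0, …, K`. Profiles are indexed by `ℕ` instead of `Fin (K + 1)` to
allow arithmetic on the positions; their values beyond `K` are irrelevant. -/
def SpineReachable (K : ℕ) (ℓ : ℕ → ℕ) (P : Profile ℕ) (i : ℕ) : Prop :=
  ∃ hi : i < K + 1,
    HubReachable (SimpleGraph.pathGraph (K + 1)) (ℓ ∘ Fin.val) (P.comp Fin.val) ⟨i, hi⟩

lemma SpineReachable.advance {i j : ℕ} (h : SpineReachable K ℓ P i) (hj : j ≤ K)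
    (hij : i + 1 = j ∨ j + 1 = i)
    (hmin : ∀ k ≤ K, i + 1 = k ∨ k + 1 = i → P.hub ℓ j ≤ P.hub ℓ k) {M : ℕ → ℕ}
    (hleaf : P.leaf i ≤ M i) (hlo : P.hub ℓ j ≤ M i) (hhi : M i ≤ P.hub ℓ j + 1) :
    SpineReachable K ℓ (P.sweep {i} M) j := by
  obtain ⟨hi, h⟩ := h
  refine ⟨by lia, ?_⟩
  have hadj : (SimpleGraph.pathGraph (K + 1)).Adj ⟨i, hi⟩ ⟨j, by lia⟩ :=
    SimpleGraph.pathGraph_adj.mpr hij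
  have hmin' (k : Fin (K + 1)) (hk : (SimpleGraph.pathGraph (K + 1)).Adj ⟨i, hi⟩ k) :=
    hmin k (by lia) (SimpleGraph.pathGraph_adj.mp hk)
  have hstep := h.advance hadj hmin' (M := M ∘ Fin.val) hleaf hlo hhi
  rwa [← Profile.sweep_singleton_comp Fin.val_injective ⟨i, hi⟩] at hstep

namespace Profile

/-- The profile after a walk from `0` to `p` that raises the leaves at every `k < p` to the visit
count of `k + 1`. -/
def outward (ℓ : ℕ → ℕ) (p : ℕ) (P : Profile ℕ) : Profile ℕ :=
  P.sweep (range p) fun k => P.hub ℓ (k + 1)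

/-- The profile after the walk of `outward` and a walk back from `p` to `0` that raises the leaves
at every positive `k ≤ p` to the visit count of `k - 1`. -/
def roundTrip (ℓ : ℕ → ℕ) (p : ℕ) (P : Profile ℕ) : Profile ℕ :=
  (P.outward ℓ p).sweep (Ioc 0 p) fun k => (P.outward ℓ p).hub ℓ (k - 1)

variable {k p : ℕ}

lemma outward_hub_of_lt (hk : k < p) :
    (P.outward ℓ p).hub ℓ k = ℓ k * P.hub ℓ (k + 1) + P.arrivals k + 1 :=
  sweep_hub_of_mem (mem_range.mpr hk)

lemma outward_hub_of_le (hk : p ≤ k) : (P.outward ℓ p).hub ℓ k = P.hub ℓ k :=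
  sweep_hub_of_notMem (by simpa using hk)

lemma outward_succ : P.outward ℓ (p + 1) = (P.outward ℓ p).sweep {p} fun k => P.hub ℓ (k + 1) := by
  rw [outward, outward, sweep_sweep (by simp), range_add_one, insert_eq, union_comm]

lemma sweep_Ioc_succ {M : ℕ → ℕ} :
    P.sweep (Ioc 0 (p + 1)) M = (P.sweep {p + 1} M).sweep (Ioc 0 p) M := by
  rw [sweep_sweep (by simp), ← insert_eq, insert_Ioc_right_eq_Ioc_add_one (Nat.zero_le p)]

end Profile

lemma SpineReachable.outward {p : ℕ} (h : SpineReachable K ℓ P 0) (hp : p ≤ K)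
    (hleaf : ∀ k < p, P.leaf k ≤ P.hub ℓ (k + 1))
    (hmin : ∀ k, k + 1 < p → P.hub ℓ (k + 2) ≤ (P.outward ℓ p).hub ℓ k) :
    SpineReachable K ℓ (P.outward ℓ p) p := by
  induction p with
  | zero => simpa only [Profile.outward, range_zero, Profile.sweep_empty] using h
  | succ p ih =>
    have hub_eq {k : ℕ} (hk : k < p) :
        (P.outward ℓ (p + 1)).hub ℓ k = (P.outward ℓ p).hub ℓ k := by
      rw [Profile.outward_hub_of_lt hk, Profile.outward_hub_of_lt (by lia)]
    have hubs_le (k : ℕ) (hk : p + 1 = k ∨ k + 1 = p) :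
        (P.outward ℓ p).hub ℓ (p + 1) ≤ (P.outward ℓ p).hub ℓ k := by
      rcases hk with rfl | rfl
      · rfl
      · rw [Profile.outward_hub_of_le (by lia), ← hub_eq (by lia)]
        exact hmin k (by lia)
    have hprev := ih (by lia) (fun k hk => hleaf k (by lia)) fun k hk =>
      (hmin k (by lia)).trans_eq (hub_eq (by lia))
    rw [Profile.outward_succ]
    apply hprev.advance hp (.inl rfl) fun k _ => hubs_le k
    · exact (Profile.sweep_leaf_of_notMem (by simp)).trans_le (hleaf p (by lia))
    · rw [Profile.outward_hub_of_le (by lia)]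
    · rw [Profile.outward_hub_of_le (by lia)]
      exact Nat.le_succ _

lemma SpineReachable.sweep_left {p : ℕ} {M : ℕ → ℕ} (h : SpineReachable K ℓ P p)
    (hleaf : ∀ k < p, P.leaf (k + 1) ≤ M (k + 1)) (hlo : ∀ k < p, P.hub ℓ k ≤ M (k + 1))
    (hhi : ∀ k < p, M (k + 1) ≤ P.hub ℓ k + 1)
    (hmin : ∀ k < p, k + 2 ≤ K → P.hub ℓ k ≤ (P.sweep (Ioc 0 p) M).hub ℓ (k + 2)) :
    SpineReachable K ℓ (P.sweep (Ioc 0 p) M) 0 := by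
  induction p generalizing P with
  | zero => simpa only [Ioc_self, Profile.sweep_empty] using h
  | succ p ih =>
    have hp := h.1
    have hubs_le (k : ℕ) (hkK : k ≤ K) (hk : p + 1 + 1 = k ∨ k + 1 = p + 1) :
        P.hub ℓ p ≤ P.hub ℓ k := by
      rcases hk with rfl | hk
      · exact (hmin p (by lia) hkK).trans_eq (Profile.sweep_hub_of_notMem (by simp))
      · obtain rfl : k = p := by lia
        rfl
    have hnext := h.advance (by lia) (.inr rfl) hubs_le (hleaf p (by lia)) (hlo p (by lia))
      (hhi p (by lia))
    have hub_eq {k : ℕ} (hk : k < p + 1) : (P.sweep {p + 1} M).hub ℓ k = P.hub ℓ k :=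
      Profile.sweep_hub_of_notMem (by simpa using hk.ne)
    rw [Profile.sweep_Ioc_succ]
    apply ih hnext
    · intro k hk
      rw [Profile.sweep_leaf_of_notMem (mem_singleton.not.mpr (by lia))]
      exact hleaf k (by lia)
    · intro k hk
      rw [hub_eq (by lia)]
      exact hlo k (by lia)
    · intro k hk
      rw [hub_eq (by lia)]
      exact hhi k (by lia)
    · intro k hk hkK
      rw [hub_eq (by lia), ← Profile.sweep_Ioc_succ]
      exact hmin k (by lia) hkK

lemma SpineReachable.roundTrip {p : ℕ} (h : SpineReachable K ℓ P 0) (hp : p ≤ K)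
    (hleaf : ∀ k < p, P.leaf k ≤ P.hub ℓ (k + 1))
    (hleaf' : ∀ k < p, (P.outward ℓ p).leaf (k + 1) ≤ (P.outward ℓ p).hub ℓ k)
    (hmin : ∀ k, k + 1 < p → P.hub ℓ (k + 2) ≤ (P.outward ℓ p).hub ℓ k)
    (hmin' : ∀ k < p, k + 2 ≤ K →
      (P.outward ℓ p).hub ℓ k ≤ (P.roundTrip ℓ p).hub ℓ (k + 2)) :
    SpineReachable K ℓ (P.roundTrip ℓ p) 0 :=
  (h.outward hp hleaf hmin).sweep_left hleaf' (fun _ _ => le_rfl) (fun _ _ => Nat.le_succ _) hmin'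

end Spine
/-! ### Growth over round trips -/

section Growth

namespace Profile

variable {ℓ : ℕ → ℕ} {P : Profile ℕ} {k p : ℕ}

lemma roundTrip_hub_succ (hk : k < p) : (P.roundTrip ℓ p).hub ℓ (k + 1) =
    ℓ (k + 1) * (P.outward ℓ p).hub ℓ k + (P.outward ℓ p).arrivals (k + 1) + 1 :=
  sweep_hub_of_mem (by simpa using hk)

lemma roundTrip_hub_of_lt (hk : p < k) : (P.roundTrip ℓ p).hub ℓ k = P.hub ℓ k := by
  rw [roundTrip, sweep_hub_of_notMem (by simp [hk]), outward_hub_of_le hk.le]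

lemma roundTrip_leaf_zero (hp : 0 < p) : (P.roundTrip ℓ p).leaf 0 = P.hub ℓ 1 := by
  rw [roundTrip, sweep_leaf_of_notMem (by simp), outward, sweep_leaf_of_mem (mem_range.mpr hp)]

lemma roundTrip_leaf_succ (hk : k < p) :
    (P.roundTrip ℓ p).leaf (k + 1) = (P.outward ℓ p).hub ℓ k :=
  sweep_leaf_of_mem (by simpa using hk)

lemma roundTrip_leaf_of_lt (hk : p < k) : (P.roundTrip ℓ p).leaf k = P.leaf k := by
  rw [roundTrip, sweep_leaf_of_notMem (by simp [hk]), outward,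
    sweep_leaf_of_notMem (by simpa using hk.le)]

lemma roundTrip_arrivals_of_lt (hk : p < k) : (P.roundTrip ℓ p).arrivals k = P.arrivals k := by
  rw [roundTrip, sweep_arrivals_of_notMem (by simp [hk]), outward,
    sweep_arrivals_of_notMem (by simpa using hk.le)]

lemma mul_hub_le_outward_hub (hk : k < p) :
    ℓ k * P.hub ℓ (k + 1) ≤ (P.outward ℓ p).hub ℓ k := by
  rw [outward_hub_of_lt hk]
  lia

lemma mul_outward_hub_le_roundTrip_hub (hk : k < p) :
    ℓ (k + 1) * (P.outward ℓ p).hub ℓ k ≤ (P.roundTrip ℓ p).hub ℓ (k + 1) := by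
  rw [roundTrip_hub_succ hk]
  lia

lemma mul_mul_hub_le_roundTrip_hub (hk : k < p) :
    ℓ (k + 1) * (ℓ k * P.hub ℓ (k + 1)) ≤ (P.roundTrip ℓ p).hub ℓ (k + 1) :=
  (Nat.mul_le_mul_left _ (mul_hub_le_outward_hub hk)).trans (mul_outward_hub_le_roundTrip_hub hk)

lemma hub_lt_outward_hub (hk : k < p) (hleaf : P.leaf k ≤ P.hub ℓ (k + 1)) :
    P.hub ℓ k < (P.outward ℓ p).hub ℓ k := by
  rw [outward_hub_of_lt hk, hub, Nat.lt_succ_iff]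
  gcongr

/-- The profile after a first walk from `K` to `0`, visiting on the way all leaves at even positive
positions and no others. -/
def firstSweep (K : ℕ) : Profile ℕ := sweep ⟨0, 0⟩ (Ioc 0 K) fun k => if Even k then 1 else 0

lemma firstSweep_leaf_le (K k : ℕ) : (firstSweep K).leaf k ≤ 1 := by
  simp only [firstSweep, sweep, piecewise, Pi.zero_apply]
  grind

lemma firstSweep_leaf_of_not_even {K : ℕ} (hk : ¬Even k) : (firstSweep K).leaf k = 0 := by
  simp [firstSweep, sweep, piecewise, hk]

lemma firstSweep_arrivals_le (K k : ℕ) : (firstSweep K).arrivals k ≤ 1 := sweep_arrivals_le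

lemma firstSweep_hub_of_not_even {K : ℕ} (hk : ¬Even k) (hkK : k ≤ K) :
    (firstSweep K).hub ℓ k = 1 := by
  have hk₀ : 0 < k := Nat.pos_of_ne_zero fun h => hk (h ▸ Even.zero)
  simp [firstSweep, sweep_hub_of_mem (mem_Ioc.mpr ⟨hk₀, hkK⟩), hk]

lemma firstSweep_hub_of_even {K : ℕ} (hk : Even k) (hk₀ : 0 < k) (hkK : k ≤ K) :
    (firstSweep K).hub ℓ k = ℓ k + 1 := by
  simp [firstSweep, sweep_hub_of_mem (mem_Ioc.mpr ⟨hk₀, hkK⟩), hk]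

end Profile

lemma spineReachable_firstSweep (K : ℕ) (ℓ : ℕ → ℕ) :
    SpineReachable K ℓ (Profile.firstSweep K) 0 := by
  have hstart : SpineReachable K ℓ ⟨0, 0⟩ K := ⟨K.lt_succ_self, .start _⟩
  have hub_eq (k : ℕ) : Profile.hub ℓ ⟨0, 0⟩ k = 0 := by simp [Profile.hub]
  apply hstart.sweep_left
  · simp
  · simp [hub_eq]
  · intro k _
    split_ifs <;> lia
  · simp [hub_eq]

/-- The state after `t` round trips, the first to position `1` and each later one `2` further, on
the path `0, …, K` with `D + k` leaves at `k`. The positions from `2 * t` on have not been changed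
since the first sweep. As long as `4 * t ≤ D`, the bound `hub_le` says that the counts of the
positive positions at most double from one position to the next, so that once the
walk has left a position, this position has at least as many visits as the one after the next and
the walk goes on. -/
structure SweepInvariant (D K t : ℕ) (P : Profile ℕ) : Prop where
  reachable : SpineReachable K (D + ·) P 0
  arrivals_le : ∀ k, P.arrivals k ≤ 2 * t + 1
  leaf_le : ∀ k < 2 * t + 1, P.leaf k ≤ P.hub (D + ·) (k + 1)
  hub_le : ∀ k < 2 * t, D * (P.hub (D + ·) (k + 2) + 2) ≤ (D + 4 * t) * P.hub (D + ·) (k + 1)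
  leaf_eq : ∀ k, 2 * t ≤ k → P.leaf k = (Profile.firstSweep K).leaf k
  arrivals_eq : ∀ k, 2 * t ≤ k → P.arrivals k = (Profile.firstSweep K).arrivals k
  pow_le : D ^ (2 * t) ≤ P.hub (D + ·) 1

namespace SweepInvariant

variable {D K t k : ℕ} {P : Profile ℕ}

lemma zero (hK : 1 ≤ K) : SweepInvariant D K 0 (Profile.firstSweep K) where
  reachable := spineReachable_firstSweep K _
  arrivals_le := Profile.firstSweep_arrivals_le K
  leaf_le k hk := by
    obtain rfl : k = 0 := by lia
    rw [Profile.firstSweep_hub_of_not_even (by decide) hK]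
    exact Profile.firstSweep_leaf_le K 0
  hub_le k hk := by lia
  leaf_eq _ _ := rfl
  arrivals_eq _ _ := rfl
  pow_le := (Profile.firstSweep_hub_of_not_even (by decide) hK).ge

lemma hub_eq_firstSweep (h : SweepInvariant D K t P) (hk : 2 * t ≤ k) {ℓ : ℕ → ℕ} :
    P.hub ℓ k = (Profile.firstSweep K).hub ℓ k := by
  rw [Profile.hub, h.leaf_eq k hk, h.arrivals_eq k hk, Profile.hub]

lemma hub_turn (h : SweepInvariant D K t P) (hK : 2 * t + 1 ≤ K) :
    P.hub (D + ·) (2 * t + 1) = 1 := by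
  rw [h.hub_eq_firstSweep (by lia), Profile.firstSweep_hub_of_not_even (by simp) hK]

lemma hub_turn_add_one (h : SweepInvariant D K t P) (hK : 2 * t + 2 ≤ K) :
    P.hub (D + ·) (2 * t + 2) = D + (2 * t + 2) + 1 := by
  rw [h.hub_eq_firstSweep (by lia),
    Profile.firstSweep_hub_of_even (by simp [parity_simps]) (by lia) hK]

lemma hub_le_outward_hub (h : SweepInvariant D K t P) (hD : 4 * t + 4 ≤ D) (hk : k < 2 * t) :
    P.hub (D + ·) (k + 2) ≤ (P.outward (D + ·) (2 * t + 1)).hub (D + ·) k := by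
  set F := P.hub (D + ·) (k + 1)
  have hle : P.hub (D + ·) (k + 2) ≤ 2 * F := by
    have hmul : D * (P.hub (D + ·) (k + 2) + 2) ≤ D * (2 * F) :=
      calc _ ≤ (D + 4 * t) * F := h.hub_le k hk
        _ ≤ (2 * D) * F := by gcongr; lia
        _ = _ := by ring
    exact (Nat.le_add_right _ 2).trans (Nat.le_of_mul_le_mul_left hmul (by lia))
  calc P.hub (D + ·) (k + 2) ≤ 2 * F := hle
    _ ≤ (D + k) * F := by gcongr; lia
    _ ≤ _ := Profile.mul_hub_le_outward_hub (ℓ := (D + ·)) (by lia)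

lemma outward_hub_le_roundTrip_hub (h : SweepInvariant D K t P) (hD : 4 * t + 4 ≤ D)
    (hK : 2 * t + 2 ≤ K) (hk : k < 2 * t + 1) :
    (P.outward (D + ·) (2 * t + 1)).hub (D + ·) k ≤
      (P.roundTrip (D + ·) (2 * t + 1)).hub (D + ·) (k + 2) := by
  rw [Profile.outward_hub_of_lt hk]
  rcases (Nat.lt_succ_iff.mp hk).lt_or_eq with hk | rfl
  · have harr := h.arrivals_le k
    calc (D + k) * P.hub (D + ·) (k + 1) + P.arrivals k + 1
        ≤ (D + (k + 2)) * (P.hub (D + ·) (k + 1) + 1) := by nlinarith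
      _ ≤ (D + (k + 2)) * (P.outward (D + ·) (2 * t + 1)).hub (D + ·) (k + 1) := by
        gcongr
        exact Profile.hub_lt_outward_hub (by lia) (h.leaf_le (k + 1) (by lia))
      _ ≤ _ := Profile.mul_outward_hub_le_roundTrip_hub (ℓ := (D + ·)) (k := k + 1) (by lia)
  · have harr := h.arrivals_eq (2 * t) le_rfl ▸ Profile.firstSweep_arrivals_le K (2 * t)
    rw [Profile.roundTrip_hub_of_lt (by lia), h.hub_turn (by lia), h.hub_turn_add_one hK]
    lia

lemma reachable_roundTrip (h : SweepInvariant D K t P) (hD : 4 * t + 4 ≤ D) (hK : 2 * t + 2 ≤ K) :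
    SpineReachable K (D + ·) (P.roundTrip (D + ·) (2 * t + 1)) 0 := by
  apply h.reachable.roundTrip (by lia) h.leaf_le
  · intro k hk
    rcases (Nat.lt_succ_iff.mp hk).lt_or_eq with hk | rfl
    · rw [Profile.outward, Profile.sweep_leaf_of_mem (by simpa using hk)]
      exact h.hub_le_outward_hub hD hk
    · rw [Profile.outward, Profile.sweep_leaf_of_notMem (by simp), h.leaf_eq _ (by lia),
        Profile.firstSweep_leaf_of_not_even (by simp)]
      exact Nat.zero_le _
  · exact fun k hk => h.hub_le_outward_hub hD (by lia)
  · exact fun k hk _ => h.outward_hub_le_roundTrip_hub hD hK hk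

lemma roundTrip_leaf_le (h : SweepInvariant D K t P) (hD : 4 * t + 4 ≤ D) (hK : 2 * t + 3 ≤ K)
    (hk : k < 2 * t + 3) : (P.roundTrip (D + ·) (2 * t + 1)).leaf k ≤
      (P.roundTrip (D + ·) (2 * t + 1)).hub (D + ·) (k + 1) := by
  rcases k with _ | k
  · rw [Profile.roundTrip_leaf_zero (by lia)]
    calc P.hub (D + ·) 1 ≤ (D + 1) * (D * P.hub (D + ·) 1) := by
          rw [← mul_assoc]
          exact Nat.le_mul_of_pos_left _ (Nat.mul_pos (by lia) (by lia))
      _ ≤ _ := Profile.mul_mul_hub_le_roundTrip_hub (ℓ := (D + ·)) (k := 0) (by lia)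
  · rcases (Nat.lt_succ_iff.mp (Nat.lt_of_succ_lt_succ hk)).lt_or_eq with hk | rfl
    · rw [Profile.roundTrip_leaf_succ hk]
      exact h.outward_hub_le_roundTrip_hub hD (by lia) hk
    · rw [Profile.roundTrip_leaf_of_lt (by lia), Profile.roundTrip_hub_of_lt (by lia),
        h.leaf_eq _ (by lia), h.hub_eq_firstSweep (by lia),
        Profile.firstSweep_hub_of_not_even (by simp [parity_simps]) hK]
      exact Profile.firstSweep_leaf_le K _

lemma roundTrip_hub_add_two_le (h : SweepInvariant D K t P) (hD : 4 * t + 4 ≤ D) (hk : k < 2 * t) :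
    (P.roundTrip (D + ·) (2 * t + 1)).hub (D + ·) (k + 2) + 2 ≤
      (D + k + 2) * (D + k + 1) * (P.hub (D + ·) (k + 2) + 2) := by
  have harr := h.arrivals_le (k + 1)
  have harr' : (P.outward (D + ·) (2 * t + 1)).arrivals (k + 2) ≤ 2 * t + 2 :=
    Profile.sweep_arrivals_le.trans (Nat.succ_le_succ (h.arrivals_le (k + 2)))
  rw [Profile.roundTrip_hub_succ (k := k + 1) (by lia), Profile.outward_hub_of_lt (by lia)]
  nlinarith

lemma roundTrip_hub_le (h : SweepInvariant D K t P) (hD : 4 * t + 4 ≤ D) (hK : 2 * t + 3 ≤ K)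
    (hk : k < 2 * t + 2) : D * ((P.roundTrip (D + ·) (2 * t + 1)).hub (D + ·) (k + 2) + 2) ≤
      (D + 4 * (t + 1)) * (P.roundTrip (D + ·) (2 * t + 1)).hub (D + ·) (k + 1) := by
  set R := P.roundTrip (D + ·) (2 * t + 1) with hR
  set F := P.hub (D + ·) (k + 1) with hF
  have hgrowth (hk : k < 2 * t + 1) : (D + k + 1) * (D + k) * F ≤ R.hub (D + ·) (k + 1) :=
    (mul_assoc _ _ _).trans_le (Profile.mul_mul_hub_le_roundTrip_hub (ℓ := (D + ·)) hk)
  rcases lt_trichotomy k (2 * t) with hk | rfl | hk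
  · calc D * (R.hub (D + ·) (k + 2) + 2)
        ≤ D * ((D + k + 2) * (D + k + 1) * (P.hub (D + ·) (k + 2) + 2)) :=
          Nat.mul_le_mul_left _ (h.roundTrip_hub_add_two_le hD hk)
      _ = (D + k + 1) * (D + k + 2) * (D * (P.hub (D + ·) (k + 2) + 2)) := by ring
      _ ≤ (D + k + 1) * (D + k + 2) * ((D + 4 * t) * F) :=
          Nat.mul_le_mul_left _ (h.hub_le k hk)
      _ = (D + k + 1) * ((D + k + 2) * (D + 4 * t)) * F := by ring
      _ ≤ (D + k + 1) * ((D + k) * (D + 4 * (t + 1))) * F :=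
          Nat.mul_le_mul_right _ (Nat.mul_le_mul_left _ (by nlinarith))
      _ = (D + 4 * (t + 1)) * ((D + k + 1) * (D + k) * F) := by ring
      _ ≤ _ := Nat.mul_le_mul_left _ (hgrowth (by lia))
  · have hturn := hgrowth (by lia)
    rw [hF, h.hub_turn (by lia)] at hturn
    rw [hR, Profile.roundTrip_hub_of_lt (by lia), h.hub_turn_add_one (by lia)]
    calc D * (D + (2 * t + 2) + 1 + 2)
        ≤ (D + 2 * t) * ((D + 4 * (t + 1)) * (D + 2 * t + 1)) :=
          Nat.mul_le_mul (Nat.le_add_right _ _) (by nlinarith)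
      _ = (D + 4 * (t + 1)) * ((D + 2 * t + 1) * (D + 2 * t) * 1) := by ring
      _ ≤ _ := Nat.mul_le_mul_left _ hturn
  · obtain rfl : k = 2 * t + 1 := by lia
    rw [hR, Profile.roundTrip_hub_of_lt (by lia), Profile.roundTrip_hub_of_lt (by lia),
      h.hub_turn_add_one (by lia), h.hub_eq_firstSweep (by lia),
      Profile.firstSweep_hub_of_not_even (by simp [parity_simps]) hK]
    nlinarith

lemma succ (h : SweepInvariant D K t P) (hD : 4 * t + 4 ≤ D) (hK : 2 * t + 3 ≤ K) :
    SweepInvariant D K (t + 1) (P.roundTrip (D + ·) (2 * t + 1)) where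
  reachable := h.reachable_roundTrip hD (by lia)
  arrivals_le k := by
    have harr := h.arrivals_le k
    calc _ ≤ (P.outward (D + ·) (2 * t + 1)).arrivals k + 1 := Profile.sweep_arrivals_le
      _ ≤ P.arrivals k + 1 + 1 := Nat.succ_le_succ Profile.sweep_arrivals_le
      _ ≤ _ := by lia
  leaf_le _ hk := h.roundTrip_leaf_le hD hK hk
  hub_le _ hk := h.roundTrip_hub_le hD hK hk
  leaf_eq k hk := (Profile.roundTrip_leaf_of_lt (by lia)).trans (h.leaf_eq k (by lia))
  arrivals_eq k hk := (Profile.roundTrip_arrivals_of_lt (by lia)).trans (h.arrivals_eq k (by lia))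
  pow_le :=
    calc D ^ (2 * (t + 1)) = D * (D * D ^ (2 * t)) := by ring
      _ ≤ (D + 1) * (D * P.hub (D + ·) 1) := by gcongr; exacts [Nat.le_succ D, h.pow_le]
      _ ≤ _ := Profile.mul_mul_hub_le_roundTrip_hub (ℓ := (D + ·)) (k := 0) (by lia)

end SweepInvariant

lemma exists_sweepInvariant {D K t : ℕ} (hD : 4 * t ≤ D) (hK : 2 * t + 1 ≤ K) :
    ∃ P, SweepInvariant D K t P := by
  induction t with
  | zero => exact ⟨_, .zero hK⟩
  | succ t ih =>
    obtain ⟨P, hP⟩ := ih (by lia) (by lia)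
    exact ⟨_, hP.succ hD hK⟩

end Growth
/-! ### The caterpillar -/

section Caterpillar

/-- The caterpillar with spine `0, …, 2 * T + 1` and `D + k` leaves at its vertex `k`. -/
def caterpillar (D T : ℕ) : SimpleGraph (Fin (2 * T + 2) ⊕ Σ k : Fin (2 * T + 2), Fin (D + k)) :=
  attachLeaves (SimpleGraph.pathGraph (2 * T + 2)) fun k => D + k

lemma isTree_caterpillar (D T : ℕ) : (caterpillar D T).IsTree :=
  isTree_attachLeaves (isTree_pathGraph _) _

lemma ncard_neighborSet_caterpillar_le (D T : ℕ) (x) :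
    ((caterpillar D T).neighborSet x).ncard ≤ 2 + (D + (2 * T + 1)) :=
  ncard_neighborSet_attachLeaves_le ncard_neighborSet_pathGraph_le (fun k => by lia) (by lia) x

lemma card_caterpillar (D T : ℕ) :
    Fintype.card (Fin (2 * T + 2) ⊕ Σ k : Fin (2 * T + 2), Fin (D + k)) =
      (T + 1) * (2 * D + 2 * T + 3) := by
  have hgauss : ∑ k ∈ range (2 * T + 2), k = (T + 1) * (2 * T + 1) := by
    rw [← mul_right_cancel_iff_of_pos two_pos, sum_range_id_mul_two]
    lia
  simp only [Fintype.card_sum, Fintype.card_sigma, Fintype.card_fin, sum_add_distrib, sum_const,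
    card_univ, smul_eq_mul, Fin.sum_univ_eq_sum_range (fun k => k), hgauss]
  ring

theorem exists_isLFVWalk_caterpillar {D T : ℕ} (hD : 4 * T ≤ D) :
    ∃ w x, IsLFVWalk (caterpillar D T) w ∧ ∀ t < D ^ (2 * T), w t ≠ x := by
  obtain ⟨P, hP⟩ := exists_sweepInvariant hD (le_refl (2 * T + 1))
  obtain ⟨_, hreach⟩ := hP.reachable
  have : Nontrivial (Fin (2 * T + 2) ⊕ Σ k : Fin (2 * T + 2), Fin (D + k)) :=
    Sum.inl_injective.nontrivial
  have hnbr (v) : ∃ u, (caterpillar D T).Adj v u :=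
    (isTree_caterpillar D T).connected.preconnected.exists_adj_of_nontrivial v
  have hleaf : P.leaf (2 * T + 1) = 0 := by
    rw [hP.leaf_eq _ (by lia), Profile.firstSweep_leaf_of_not_even (by simp)]
  obtain ⟨w, hw, hmiss⟩ := hreach.exists_isLFVWalk hnbr
    (x := .inr ⟨Fin.last (2 * T + 1), ⟨0, by simp⟩⟩) hleaf (.inl 1)
  exact ⟨w, _, hw, fun t ht => hmiss t (ht.trans_le hP.pow_le)⟩

end Caterpillar

lemma ncard_neighborSet_overFin_le {V : Type*} [Fintype V] {G : SimpleGraph V} {n d : ℕ}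
    (hn : Fintype.card V = n) (hd : ∀ v, (G.neighborSet v).ncard ≤ d) (v : Fin n) :
    ((G.overFin hn).neighborSet v).ncard ≤ d := by
  obtain ⟨u, rfl⟩ := (G.overFinIso hn).surjective v
  exact (Nat.card_congr ((G.overFinIso hn).mapNeighborSet u)).symm.trans_le (hd u)

lemma le_ceil_sqrt {m n : ℕ} (h : m ^ 2 ≤ n) : m ≤ ⌈√(n : ℝ)⌉₊ := by
  have hsqrt : (m : ℝ) ≤ √(n : ℝ) := Real.le_sqrt_of_sq_le (by exact_mod_cast h)
  exact_mod_cast hsqrt.trans (Nat.le_ceil _)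

lemma rpow_mul_sqrt_le {k T n : ℕ} (hk : 0 < k) (hn : 0 < n) (h : n ≤ (k * T) ^ 2) :
    (n : ℝ) ^ (1 / k * √(n : ℝ)) ≤ ((k * T) ^ (2 * T) : ℕ) := by
  have hk' : (0 : ℝ) < k := by exact_mod_cast hk
  have hsqrt : √(n : ℝ) ≤ k * T := Real.sqrt_le_iff.mpr ⟨by positivity, by exact_mod_cast h⟩
  calc (n : ℝ) ^ (1 / k * √(n : ℝ)) ≤ (n : ℝ) ^ (T : ℝ) := by
        gcongr
        · exact_mod_cast hn
        · rwa [one_div_mul_eq_div, div_le_iff₀' hk']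
    _ = ((n ^ T : ℕ) : ℝ) := by rw [Real.rpow_natCast, Nat.cast_pow]
    _ ≤ ((k * T) ^ (2 * T) : ℕ) := by
        rw [pow_mul]
        gcongr

end LFV

/-- There is a constant `c > 0` such that for infinitely many `n` there is a tree on `n`
vertices of maximum degree at most `3 * ⌈√n⌉` and a walk on it following the LFV-v policy
whose cover time is at least `n ^ (c * √n)`. -/
theorem lfv_v_superpolynomial_lower_bound :
    ∃ c : ℝ, 0 < c ∧
      ∀ N : ℕ, ∃ n : ℕ, N ≤ n ∧
        ∃ G : SimpleGraph (Fin n),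
          -- `G` is a tree
          G.Connected ∧ G.IsAcyclic ∧
          -- maximum degree at most `3 * ⌈√n⌉`
          (∀ v : Fin n, {u : Fin n | G.Adj v u}.ncard ≤ 3 * ⌈Real.sqrt n⌉₊) ∧
          ∃ w : ℕ → Fin n,
            -- `w` is a walk on `G`
            (∀ t : ℕ, G.Adj (w t) (w (t + 1))) ∧
            -- `w` follows the LFV-v policy
            (∀ t : ℕ, ∀ u : Fin n, G.Adj (w t) u →
              {t' : ℕ | t' ≤ t ∧ w t' = w (t + 1)}.ncard ≤
                {t' : ℕ | t' ≤ t ∧ w t' = u}.ncard) ∧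
            -- the cover time of `w` is at least `n ^ (c * √n)`
            ∃ v : Fin n, ∀ t : ℕ, (t : ℝ) < (n : ℝ) ^ (c * Real.sqrt n) → w t ≠ v := by
  refine ⟨1 / 7, by norm_num, fun N => ?_⟩
  obtain ⟨T, hT⟩ : ∃ T, T = N + 1 := ⟨_, rfl⟩
  obtain ⟨n, hn⟩ : ∃ n, n = (T + 1) * (2 * (8 * T) + 2 * T + 3) := ⟨_, rfl⟩
  have hcard := (LFV.card_caterpillar (8 * T) T).trans hn.symm
  let e := (LFV.caterpillar (8 * T) T).overFinIso hcard
  obtain ⟨w, x, hw, hx⟩ := LFV.exists_isLFVWalk_caterpillar (D := 8 * T) (T := T) (by lia)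
  have htree := e.isTree_iff.mp (LFV.isTree_caterpillar (8 * T) T)
  have hwe := hw.comp_iso e
  refine ⟨n, by nlinarith, _, htree.connected, htree.isAcyclic, fun v => ?_, e ∘ w, hwe.adj,
    hwe.visitCount_le, e x, fun t ht => e.injective.ne (hx t ?_)⟩
  · calc _ ≤ 2 + (8 * T + (2 * T + 1)) := LFV.ncard_neighborSet_overFin_le hcard
          (LFV.ncard_neighborSet_caterpillar_le _ _) v
      _ ≤ 3 * (4 * T + 2) := by lia
      _ ≤ _ := Nat.mul_le_mul_left 3 (LFV.le_ceil_sqrt (by nlinarith))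
  · have hbound := LFV.rpow_mul_sqrt_le (k := 7) (T := T) (n := n) (by lia) (by nlinarith)
      (by nlinarith)
    calc t < (7 * T) ^ (2 * T) := by exact_mod_cast ht.trans_le hbound
      _ ≤ (8 * T) ^ (2 * T) := by gcongr; lia
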